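/- Let φ(x) be a formula of the correspondence language with at most the free variable x. Then φ(x) is logically equivalent to the (1,2)-standard x-translation ST_12(I,x) of some modal intuitionistic formula I if and only if there exists k ∈ ℕ such that φ(x) is invariant with respect to (1,2)-modal k-asimulations. -/

import Mathlib

namespace ModalIntAsim

/-- Binary relation symbols of the correspondence vocabulary: R, R_□, R_◇. -/
inductive RelSym : Type
  | r | box | diam
deriving DecidableEq

/-- Formulas of the correspondence language: classical first-order logic without
identity, with variables indexed by `ℕ`, unary predicate letters `P n` (n : ℕ),
and the three binary relation symbols. -/
inductive FOForm : Type
  | falsum : FOForm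
  | pred : ℕ → ℕ → FOForm            -- `pred n v` is `P_n(x_v)`
  | rel : RelSym → ℕ → ℕ → FOForm    -- `rel s v w` is `S(x_v, x_w)`
  | conj : FOForm → FOForm → FOForm
  | disj : FOForm → FOForm → FOForm
  | impl : FOForm → FOForm → FOForm
  | all : ℕ → FOForm → FOForm
  | ex : ℕ → FOForm → FOForm

namespace FOForm

/-- Free variables of a correspondence formula. -/
def freeVars : FOForm → Finset ℕ
  | falsum => ∅
  | pred _ v => {v}
  | rel _ v w => {v, w}
  | conj f g => f.freeVars ∪ g.freeVars
  | disj f g => f.freeVars ∪ g.freeVars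
  | impl f g => f.freeVars ∪ g.freeVars
  | all v f => f.freeVars \ {v}
  | ex v f => f.freeVars \ {v}

/-- The unary predicate letters occurring in a formula (the binary relation
symbols R, R_□, R_◇ are regarded as belonging to every vocabulary Σ_φ). -/
def predLetters : FOForm → Finset ℕ
  | falsum => ∅
  | pred n _ => {n}
  | rel _ _ _ => ∅
  | conj f g => f.predLetters ∪ g.predLetters
  | disj f g => f.predLetters ∪ g.predLetters
  | impl f g => f.predLetters ∪ g.predLetters
  | all _ f => f.predLetters
  | ex _ f => f.predLetters

/-- Degree of a formula: the greatest number of nested quantifiers. -/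
def degree : FOForm → ℕ
  | falsum => 0
  | pred _ _ => 0
  | rel _ _ _ => 0
  | conj f g => max f.degree g.degree
  | disj f g => max f.degree g.degree
  | impl f g => max f.degree g.degree
  | all _ f => f.degree + 1
  | ex _ f => f.degree + 1

end FOForm

/-- A model of the correspondence language: a domain together with
interpretations of R, R_□, R_◇ and of the unary predicate letters.
(A Θ-model only consults the letters in Θ.) -/
structure Model : Type 1 where
  U : Type
  rel : U → U → Prop
  relBox : U → U → Prop
  relDiam : U → U → Prop
  pred : ℕ → U → Prop

/-- Interpretation of a binary relation symbol in a model. -/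
def Model.relOf (M : Model) : RelSym → M.U → M.U → Prop
  | .r => M.rel
  | .box => M.relBox
  | .diam => M.relDiam

/-- Tarskian satisfaction of a formula in a model under an assignment. -/
def Sat (M : Model) : FOForm → (ℕ → M.U) → Prop
  | .falsum, _ => False
  | .pred n v, α => M.pred n (α v)
  | .rel s v w, α => M.relOf s (α v) (α w)
  | .conj f g, α => Sat M f α ∧ Sat M g α
  | .disj f g, α => Sat M f α ∨ Sat M g α
  | .impl f g, α => Sat M f α → Sat M g α
  | .all v f, α => ∀ u : M.U, Sat M f (Function.update α v u)
  | .ex v f, α => ∃ u : M.U, Sat M f (Function.update α v u)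

/-- `M, a ⊨ φ(x)`: φ is true in `M` under any assignment sending `x` to `a`. -/
def SatAt (M : Model) (a : M.U) (x : ℕ) (φ : FOForm) : Prop :=
  ∀ α : ℕ → M.U, α x = a → Sat M φ α

/-- Logical equivalence of correspondence formulas. -/
def Equiv (φ ψ : FOForm) : Prop :=
  ∀ (M : Model) (α : ℕ → M.U), Sat M φ α ↔ Sat M ψ α

/-- Logical entailment between correspondence formulas. -/
def Entails (φ ψ : FOForm) : Prop :=
  ∀ (M : Model) (α : ℕ → M.U), Sat M φ α → Sat M ψ α

/-- Modal intuitionistic formulas: built from propositional letters `p n`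
using ⊥, ∧, ∨, →, □, ◇. -/
inductive MForm : Type
  | bot : MForm
  | prop : ℕ → MForm
  | conj : MForm → MForm → MForm
  | disj : MForm → MForm → MForm
  | impl : MForm → MForm → MForm
  | box : MForm → MForm
  | diam : MForm → MForm

/-- The (i,j)-standard x-translation `ST_ij`.  `boxOne = true` means the box
clause (□₁) is used (i = 1), `boxOne = false` means (□₂) (i = 2); likewise
`diamOne = true` means the diamond clause (◇₁) (j = 1) and `diamOne = false`
means (◇₂) (j = 2).  Bound variables are chosen fresh as `x+1`, `x+2`. -/
def ST (boxOne diamOne : Bool) : MForm → ℕ → FOForm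
  | .bot, _ => .falsum
  | .prop n, x => .pred n x
  | .conj I J, x => .conj (ST boxOne diamOne I x) (ST boxOne diamOne J x)
  | .disj I J, x => .disj (ST boxOne diamOne I x) (ST boxOne diamOne J x)
  | .impl I J, x =>
      .all (x + 1) (.impl (.rel .r x (x + 1))
        (.impl (ST boxOne diamOne I (x + 1)) (ST boxOne diamOne J (x + 1))))
  | .box I, x =>
      if boxOne then
        .all (x + 1) (.impl (.rel .box x (x + 1)) (ST boxOne diamOne I (x + 1)))
      else
        .all (x + 1) (.impl (.rel .r x (x + 1))
          (.all (x + 2) (.impl (.rel .box (x + 1) (x + 2)) (ST boxOne diamOne I (x + 2)))))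
  | .diam I, x =>
      if diamOne then
        .ex (x + 1) (.conj (.rel .diam x (x + 1)) (ST boxOne diamOne I (x + 1)))
      else
        .all (x + 1) (.impl (.rel .r x (x + 1))
          (.ex (x + 2) (.conj (.rel .diam (x + 1) (x + 2)) (ST boxOne diamOne I (x + 2)))))

/-! ### Conditions on relations between tuples (the k-asimulation conditions).
A relation between the two models is represented by its two directed
components; `N` is the model of the source tuple and `P` that of the target
tuple.  A tuple `(ā_m, a)` is represented as the list `as ++ [a]`, with
`m = as.length`. -/

section TupleConds

variable (N P : Model)

/-- The "p-type" condition: related tuples are nonempty and of equal length. -/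
def TypeCond (A : List N.U → List P.U → Prop) : Prop :=
  ∀ as bs, A as bs → as ≠ [] ∧ as.length = bs.length

/-- (p-base). -/
def BaseCond (Θ : Set ℕ) (A : List N.U → List P.U → Prop) : Prop :=
  ∀ (as : List N.U) (bs : List P.U) (a : N.U) (b : P.U),
    A (as ++ [a]) (bs ++ [b]) → ∀ n ∈ Θ, N.pred n a → P.pred n b

/-- (p-step). -/
def StepCond (k : ℕ) (A : List N.U → List P.U → Prop)
    (Arev : List P.U → List N.U → Prop) : Prop :=
  ∀ (as : List N.U) (bs : List P.U) (a : N.U) (b d : P.U),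
    A (as ++ [a]) (bs ++ [b]) → P.rel b d → as.length < k →
    ∃ c : N.U, N.rel a c ∧ A (as ++ [a, c]) (bs ++ [b, d]) ∧
      Arev (bs ++ [b, d]) (as ++ [a, c])

/-- (p-box-1). -/
def Box1Cond (k : ℕ) (A : List N.U → List P.U → Prop) : Prop :=
  ∀ (as : List N.U) (bs : List P.U) (a : N.U) (b d : P.U),
    A (as ++ [a]) (bs ++ [b]) → P.relBox b d → as.length < k →
    ∃ c : N.U, N.relBox a c ∧ A (as ++ [a, c]) (bs ++ [b, d])

/-- (p-box-2). -/
def Box2Cond (k : ℕ) (A : List N.U → List P.U → Prop) : Prop :=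
  ∀ (as : List N.U) (bs : List P.U) (a : N.U) (b d f : P.U),
    A (as ++ [a]) (bs ++ [b]) → P.rel b d → P.relBox d f → as.length + 1 < k →
    ∃ c e : N.U, N.rel a c ∧ N.relBox c e ∧ A (as ++ [a, c, e]) (bs ++ [b, d, f])

/-- (p-diam-1). -/
def Diam1Cond (k : ℕ) (A : List N.U → List P.U → Prop) : Prop :=
  ∀ (as : List N.U) (bs : List P.U) (a c : N.U) (b : P.U),
    A (as ++ [a]) (bs ++ [b]) → N.relDiam a c → as.length < k →
    ∃ d : P.U, P.relDiam b d ∧ A (as ++ [a, c]) (bs ++ [b, d])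

/-- (p-diam-2(1)). -/
def Diam2aCond (k : ℕ) (A B : List N.U → List P.U → Prop) : Prop :=
  ∀ (as : List N.U) (bs : List P.U) (a : N.U) (b d : P.U),
    A (as ++ [a]) (bs ++ [b]) → P.rel b d → as.length + 1 < k →
    ∃ c : N.U, N.rel a c ∧ B (as ++ [a, c]) (bs ++ [b, d])

/-- (p-diam-2(2)). -/
def Diam2bCond (k : ℕ) (B A : List N.U → List P.U → Prop) : Prop :=
  ∀ (as : List N.U) (bs : List P.U) (a c : N.U) (b : P.U),
    B (as ++ [a]) (bs ++ [b]) → N.relDiam a c → as.length < k →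
    ∃ d : P.U, P.relDiam b d ∧ A (as ++ [a, c]) (bs ++ [b, d])

end TupleConds

/-- An (i,1)-modal ⟨(M₁,t),(M₂,u)⟩_k-asimulation (j = 1): a single relation `A`
given by its two directed components `A12`, `A21`. -/
def IsKAsimD1 (boxOne : Bool) (Θ : Set ℕ) (M₁ M₂ : Model) (t : M₁.U) (u : M₂.U) (k : ℕ)
    (A12 : List M₁.U → List M₂.U → Prop) (A21 : List M₂.U → List M₁.U → Prop) : Prop :=
  TypeCond M₁ M₂ A12 ∧ TypeCond M₂ M₁ A21 ∧
  A12 [t] [u] ∧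
  BaseCond M₁ M₂ Θ A12 ∧ BaseCond M₂ M₁ Θ A21 ∧
  StepCond M₁ M₂ k A12 A21 ∧ StepCond M₂ M₁ k A21 A12 ∧
  (if boxOne then Box1Cond M₁ M₂ k A12 ∧ Box1Cond M₂ M₁ k A21
   else Box2Cond M₁ M₂ k A12 ∧ Box2Cond M₂ M₁ k A21) ∧
  Diam1Cond M₁ M₂ k A12 ∧ Diam1Cond M₂ M₁ k A21

/-- An (i,2)-modal ⟨(M₁,t),(M₂,u)⟩_k-asimulation (j = 2): an ordered pair
(A, B) of relations, each given by its two directed components. -/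
def IsKAsimD2 (boxOne : Bool) (Θ : Set ℕ) (M₁ M₂ : Model) (t : M₁.U) (u : M₂.U) (k : ℕ)
    (A12 : List M₁.U → List M₂.U → Prop) (A21 : List M₂.U → List M₁.U → Prop)
    (B12 : List M₁.U → List M₂.U → Prop) (B21 : List M₂.U → List M₁.U → Prop) : Prop :=
  TypeCond M₁ M₂ A12 ∧ TypeCond M₂ M₁ A21 ∧
  TypeCond M₁ M₂ B12 ∧ TypeCond M₂ M₁ B21 ∧
  A12 [t] [u] ∧
  BaseCond M₁ M₂ Θ A12 ∧ BaseCond M₂ M₁ Θ A21 ∧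
  StepCond M₁ M₂ k A12 A21 ∧ StepCond M₂ M₁ k A21 A12 ∧
  (if boxOne then Box1Cond M₁ M₂ k A12 ∧ Box1Cond M₂ M₁ k A21
   else Box2Cond M₁ M₂ k A12 ∧ Box2Cond M₂ M₁ k A21) ∧
  Diam2aCond M₁ M₂ k A12 B12 ∧ Diam2aCond M₂ M₁ k A21 B21 ∧
  Diam2bCond M₁ M₂ k B12 A12 ∧ Diam2bCond M₂ M₁ k B21 A21

/-- φ(x) is invariant with respect to (i,1)-modal k-asimulations. -/
def KInvariantD1 (boxOne : Bool) (x : ℕ) (φ : FOForm) (k : ℕ) : Prop :=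
  ∀ Θ : Set ℕ, (φ.predLetters : Set ℕ) ⊆ Θ →
  ∀ (M₁ M₂ : Model) (t : M₁.U) (u : M₂.U)
    (A12 : List M₁.U → List M₂.U → Prop) (A21 : List M₂.U → List M₁.U → Prop),
    IsKAsimD1 boxOne Θ M₁ M₂ t u k A12 A21 →
    ∀ (a : M₁.U) (b : M₂.U), A12 [a] [b] → SatAt M₁ a x φ → SatAt M₂ b x φ

/-- φ(x) is invariant with respect to (i,2)-modal k-asimulations. -/
def KInvariantD2 (boxOne : Bool) (x : ℕ) (φ : FOForm) (k : ℕ) : Prop :=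
  ∀ Θ : Set ℕ, (φ.predLetters : Set ℕ) ⊆ Θ →
  ∀ (M₁ M₂ : Model) (t : M₁.U) (u : M₂.U)
    (A12 : List M₁.U → List M₂.U → Prop) (A21 : List M₂.U → List M₁.U → Prop)
    (B12 : List M₁.U → List M₂.U → Prop) (B21 : List M₂.U → List M₁.U → Prop),
    IsKAsimD2 boxOne Θ M₁ M₂ t u k A12 A21 B12 B21 →
    ∀ (a : M₁.U) (b : M₂.U), A12 [a] [b] → SatAt M₁ a x φ → SatAt M₂ b x φ

/-! ### Conditions for asimulations *simpliciter* (relations between elements). -/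

section ElemConds

variable (N P : Model)

/-- (base). -/
def BaseCondE (Θ : Set ℕ) (A : N.U → P.U → Prop) : Prop :=
  ∀ (a : N.U) (b : P.U), A a b → ∀ n ∈ Θ, N.pred n a → P.pred n b

/-- (step). -/
def StepCondE (A : N.U → P.U → Prop) (Arev : P.U → N.U → Prop) : Prop :=
  ∀ (a : N.U) (b d : P.U), A a b → P.rel b d →
    ∃ c : N.U, N.rel a c ∧ A c d ∧ Arev d c

/-- (box-1). -/
def Box1CondE (A : N.U → P.U → Prop) : Prop :=
  ∀ (a : N.U) (b d : P.U), A a b → P.relBox b d →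
    ∃ c : N.U, N.relBox a c ∧ A c d

/-- (box-2). -/
def Box2CondE (A : N.U → P.U → Prop) : Prop :=
  ∀ (a : N.U) (b d f : P.U), A a b → P.rel b d → P.relBox d f →
    ∃ c e : N.U, N.rel a c ∧ N.relBox c e ∧ A e f

/-- (diam-1). -/
def Diam1CondE (A : N.U → P.U → Prop) : Prop :=
  ∀ (a c : N.U) (b : P.U), A a b → N.relDiam a c →
    ∃ d : P.U, P.relDiam b d ∧ A c d

/-- (diam-2(1)). -/
def Diam2aCondE (A B : N.U → P.U → Prop) : Prop :=
  ∀ (a : N.U) (b d : P.U), A a b → P.rel b d →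
    ∃ c : N.U, N.rel a c ∧ B c d

/-- (diam-2(2)). -/
def Diam2bCondE (B A : N.U → P.U → Prop) : Prop :=
  ∀ (a c : N.U) (b : P.U), B a b → N.relDiam a c →
    ∃ d : P.U, P.relDiam b d ∧ A c d

end ElemConds

/-- An (i,1)-modal ⟨(M₁,t),(M₂,u)⟩-asimulation (j = 1). -/
def IsAsimD1 (boxOne : Bool) (Θ : Set ℕ) (M₁ M₂ : Model) (t : M₁.U) (u : M₂.U)
    (A12 : M₁.U → M₂.U → Prop) (A21 : M₂.U → M₁.U → Prop) : Prop :=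
  A12 t u ∧
  BaseCondE M₁ M₂ Θ A12 ∧ BaseCondE M₂ M₁ Θ A21 ∧
  StepCondE M₁ M₂ A12 A21 ∧ StepCondE M₂ M₁ A21 A12 ∧
  (if boxOne then Box1CondE M₁ M₂ A12 ∧ Box1CondE M₂ M₁ A21
   else Box2CondE M₁ M₂ A12 ∧ Box2CondE M₂ M₁ A21) ∧
  Diam1CondE M₁ M₂ A12 ∧ Diam1CondE M₂ M₁ A21

/-- An (i,2)-modal ⟨(M₁,t),(M₂,u)⟩-asimulation (j = 2). -/
def IsAsimD2 (boxOne : Bool) (Θ : Set ℕ) (M₁ M₂ : Model) (t : M₁.U) (u : M₂.U)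
    (A12 : M₁.U → M₂.U → Prop) (A21 : M₂.U → M₁.U → Prop)
    (B12 : M₁.U → M₂.U → Prop) (B21 : M₂.U → M₁.U → Prop) : Prop :=
  A12 t u ∧
  BaseCondE M₁ M₂ Θ A12 ∧ BaseCondE M₂ M₁ Θ A21 ∧
  StepCondE M₁ M₂ A12 A21 ∧ StepCondE M₂ M₁ A21 A12 ∧
  (if boxOne then Box1CondE M₁ M₂ A12 ∧ Box1CondE M₂ M₁ A21
   else Box2CondE M₁ M₂ A12 ∧ Box2CondE M₂ M₁ A21) ∧
  Diam2aCondE M₁ M₂ A12 B12 ∧ Diam2aCondE M₂ M₁ A21 B21 ∧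
  Diam2bCondE M₁ M₂ B12 A12 ∧ Diam2bCondE M₂ M₁ B21 A21

/-- φ(x) is invariant with respect to (i,1)-modal asimulations. -/
def InvariantD1 (boxOne : Bool) (x : ℕ) (φ : FOForm) : Prop :=
  ∀ Θ : Set ℕ, (φ.predLetters : Set ℕ) ⊆ Θ →
  ∀ (M₁ M₂ : Model) (t : M₁.U) (u : M₂.U)
    (A12 : M₁.U → M₂.U → Prop) (A21 : M₂.U → M₁.U → Prop),
    IsAsimD1 boxOne Θ M₁ M₂ t u A12 A21 →
    ∀ (a : M₁.U) (b : M₂.U), A12 a b → SatAt M₁ a x φ → SatAt M₂ b x φ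

/-- φ(x) is invariant with respect to (i,2)-modal asimulations. -/
def InvariantD2 (boxOne : Bool) (x : ℕ) (φ : FOForm) : Prop :=
  ∀ Θ : Set ℕ, (φ.predLetters : Set ℕ) ⊆ Θ →
  ∀ (M₁ M₂ : Model) (t : M₁.U) (u : M₂.U)
    (A12 : M₁.U → M₂.U → Prop) (A21 : M₂.U → M₁.U → Prop)
    (B12 : M₁.U → M₂.U → Prop) (B21 : M₂.U → M₁.U → Prop),
    IsAsimD2 boxOne Θ M₁ M₂ t u A12 A21 B12 B21 →
    ∀ (a : M₁.U) (b : M₂.U), A12 a b → SatAt M₁ a x φ → SatAt M₂ b x φ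

/-! ### Types, complete conjunctions, ω-saturation. -/

/-- `int(φ,x,l)`: the set of (2,2)-standard x-translations of modal
intuitionistic formulas which are (Σ_φ,x,l)-formulas. -/
def intSet (φ : FOForm) (x l : ℕ) : Set FOForm :=
  {ψ | (∃ I : MForm, ψ = ST false false I x) ∧
    ψ.predLetters ⊆ φ.predLetters ∧ ψ.freeVars ⊆ {x} ∧ ψ.degree ≤ l}

/-- `tp_l(φ(x),M,a)`. -/
def tpSet (φ : FOForm) (x l : ℕ) (M : Model) (a : M.U) : Set FOForm :=
  {ψ | ψ ∈ intSet φ x l ∧ SatAt M a x ψ}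

/-- Conjunction of a nonempty list of formulas. -/
def listConj : FOForm → List FOForm → FOForm
  | ψ, [] => ψ
  | ψ, χ :: L => FOForm.conj ψ (listConj χ L)

/-- Ψ(x) is a complete (φ,x,k)-conjunction. -/
def IsCompleteConj (φ : FOForm) (x k : ℕ) (Ψ : FOForm) : Prop :=
  (∃ (ψ₀ : FOForm) (L : List FOForm), ψ₀ ∈ intSet φ x k ∧
    (∀ χ ∈ L, χ ∈ intSet φ x k) ∧ Ψ = listConj ψ₀ L) ∧
  ∃ (M : Model) (a : M.U), SatAt M a x (FOForm.conj Ψ φ) ∧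
    ∀ ψ ∈ tpSet φ x k M a, Entails Ψ ψ

/-- `int_x(Θ)` for the (i,j)-standard translation. -/
def intX (Θ : Set ℕ) (boxOne diamOne : Bool) (x : ℕ) : Set FOForm :=
  {ψ | (∃ I : MForm, ψ = ST boxOne diamOne I x) ∧ (ψ.predLetters : Set ℕ) ⊆ Θ}

/-- `tp_x(M,t)` for the (i,j)-standard translation. -/
def tpX (Θ : Set ℕ) (boxOne diamOne : Bool) (x : ℕ) (M : Model) (t : M.U) : Set FOForm :=
  {ψ | ψ ∈ intX Θ boxOne diamOne x ∧ SatAt M t x ψ}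

/-- `imp_x(M,t) = ⋂ { t̄p_x(M,u) : t R_◇ u }` (for the (2,2)-translation). -/
def impX (Θ : Set ℕ) (x : ℕ) (M : Model) (t : M.U) : Set FOForm :=
  {ψ | ψ ∈ intX Θ false false x ∧ ∀ u : M.U, M.relDiam t u → ¬ SatAt M u x ψ}

/-- ω-saturation: for every finite tuple of parameters (the first `n` values of
an assignment `α`) and every set `Γ` of formulas with finitely many free
variables beyond the parameters, if `Γ` is consistent with the first-order
theory of `[M,ā]` (i.e. satisfiable together with it in some model), then `Γ`
is realized in `[M,ā]`. -/
def OmegaSaturated (M : Model) : Prop :=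
  ∀ (n : ℕ) (α : ℕ → M.U) (Γ : Set FOForm),
    (∃ k : ℕ, ∀ γ ∈ Γ, γ.freeVars ⊆ Finset.range (n + k)) →
    (∃ (N : Model) (β : ℕ → N.U),
      (∀ ψ : FOForm, ψ.freeVars ⊆ Finset.range n → Sat M ψ α → Sat N ψ β) ∧
      ∀ γ ∈ Γ, Sat N γ β) →
    ∃ α' : ℕ → M.U, (∀ i < n, α' i = α i) ∧ ∀ γ ∈ Γ, Sat M γ α'

/-! ### Relativization to a class κ of models. -/

/-- κ(Θ) is first-order axiomatizable for every finite Θ (with R ∈ Θ): for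
every finite set `S` of unary predicate letters there is a set of Θ-sentences
axiomatizing membership in κ. -/
def FinAxiomatizable (κ : Set Model) : Prop :=
  ∀ S : Finset ℕ, ∃ Ax : Set FOForm,
    (∀ ψ ∈ Ax, ψ.freeVars = ∅ ∧ (ψ.predLetters : Set ℕ) ⊆ (S : Set ℕ)) ∧
    ∀ M : Model, M ∈ κ ↔ ∀ ψ ∈ Ax, ∀ α : ℕ → M.U, Sat M ψ α

/-- φ κ-follows from ψ: {ψ, ¬φ} is not κ-satisfiable. -/
def KappaFollows (κ : Set Model) (ψ φ : FOForm) : Prop :=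
  ¬ ∃ M : Model, M ∈ κ ∧ ∃ α : ℕ → M.U, Sat M ψ α ∧ ¬ Sat M φ α

/-- κ-equivalence of formulas. -/
def KappaEquiv (κ : Set Model) (φ ψ : FOForm) : Prop :=
  KappaFollows κ φ ψ ∧ KappaFollows κ ψ φ

/-- φ(x) is κ-invariant with respect to (i,1)-modal asimulations. -/
def KappaInvariantD1 (κ : Set Model) (boxOne : Bool) (x : ℕ) (φ : FOForm) : Prop :=
  ∀ Θ : Set ℕ, (φ.predLetters : Set ℕ) ⊆ Θ →
  ∀ (M₁ M₂ : Model), M₁ ∈ κ → M₂ ∈ κ →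
  ∀ (t : M₁.U) (u : M₂.U)
    (A12 : M₁.U → M₂.U → Prop) (A21 : M₂.U → M₁.U → Prop),
    IsAsimD1 boxOne Θ M₁ M₂ t u A12 A21 →
    ∀ (a : M₁.U) (b : M₂.U), A12 a b → SatAt M₁ a x φ → SatAt M₂ b x φ

/-- φ(x) is κ-invariant with respect to (i,2)-modal asimulations. -/
def KappaInvariantD2 (κ : Set Model) (boxOne : Bool) (x : ℕ) (φ : FOForm) : Prop :=
  ∀ Θ : Set ℕ, (φ.predLetters : Set ℕ) ⊆ Θ →
  ∀ (M₁ M₂ : Model), M₁ ∈ κ → M₂ ∈ κ →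
  ∀ (t : M₁.U) (u : M₂.U)
    (A12 : M₁.U → M₂.U → Prop) (A21 : M₂.U → M₁.U → Prop)
    (B12 : M₁.U → M₂.U → Prop) (B21 : M₂.U → M₁.U → Prop),
    IsAsimD2 boxOne Θ M₁ M₂ t u A12 A21 B12 B21 →
    ∀ (a : M₁.U) (b : M₂.U), A12 a b → SatAt M₁ a x φ → SatAt M₂ b x φ

/-- φ(x) is κ-invariant with respect to (i,j)-modal asimulations
(`diamOne = true` means j = 1). -/
def KappaInvariant (κ : Set Model) (boxOne diamOne : Bool) (x : ℕ) (φ : FOForm) : Prop :=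
  if diamOne then KappaInvariantD1 κ boxOne x φ else KappaInvariantD2 κ boxOne x φ


/-! ### Proof material -/

/-- Direct Kripke-style semantics of the (1,2)-translation. -/
def MSat (M : Model) : MForm → M.U → Prop
  | .bot, _ => False
  | .prop n, a => M.pred n a
  | .conj I J, a => MSat M I a ∧ MSat M J a
  | .disj I J, a => MSat M I a ∨ MSat M J a
  | .impl I J, a => ∀ b, M.rel a b → MSat M I b → MSat M J b
  | .box I, a => ∀ b, M.relBox a b → MSat M I b
  | .diam I, a => ∀ b, M.rel a b → ∃ c, M.relDiam b c ∧ MSat M I c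

theorem sat_ST (M : Model) (I : MForm) : ∀ (x : ℕ) (α : ℕ → M.U),
    Sat M (ST true false I x) α ↔ MSat M I (α x) := by
  induction I with
  | bot => intro x α; simp [ST, Sat, MSat]
  | prop n => intro x α; simp [ST, Sat, MSat]
  | conj I J hI hJ => intro x α; simp [ST, Sat, MSat, hI, hJ]
  | disj I J hI hJ => intro x α; simp [ST, Sat, MSat, hI, hJ]
  | impl I J hI hJ => intro x α; simp [ST, Sat, MSat, hI, hJ, Model.relOf]
  | box I hI => intro x α; simp [ST, Sat, MSat, hI, Model.relOf]
  | diam I hI => intro x α; simp [ST, Sat, MSat, hI, Model.relOf]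

theorem sat_congr (M : Model) (φ : FOForm) : ∀ (α β : ℕ → M.U),
    (∀ v ∈ φ.freeVars, α v = β v) → (Sat M φ α ↔ Sat M φ β) := by
  induction φ with
  | falsum => intro α β h; rfl
  | pred n v => intro α β h; simp [FOForm.freeVars] at h; simp [Sat, h]
  | rel s v w => intro α β h; simp [FOForm.freeVars] at h; simp [Sat, h]
  | conj f g hf hg =>
    intro α β h; simp only [FOForm.freeVars, Finset.mem_union] at h
    simp only [Sat, hf α β (fun v hv => h v (Or.inl hv)), hg α β (fun v hv => h v (Or.inr hv))]
  | disj f g hf hg =>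
    intro α β h; simp only [FOForm.freeVars, Finset.mem_union] at h
    simp only [Sat, hf α β (fun v hv => h v (Or.inl hv)), hg α β (fun v hv => h v (Or.inr hv))]
  | impl f g hf hg =>
    intro α β h; simp only [FOForm.freeVars, Finset.mem_union] at h
    simp only [Sat, hf α β (fun v hv => h v (Or.inl hv)), hg α β (fun v hv => h v (Or.inr hv))]
  | all v f hf =>
    intro α β h; simp only [FOForm.freeVars, Finset.mem_sdiff, Finset.mem_singleton] at h
    simp only [Sat]
    refine forall_congr' fun u => hf _ _ fun w hw => ?_
    by_cases hwv : w = v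
    · subst hwv; simp
    · simp [Function.update_of_ne hwv, h w ⟨hw, hwv⟩]
  | ex v f hf =>
    intro α β h; simp only [FOForm.freeVars, Finset.mem_sdiff, Finset.mem_singleton] at h
    simp only [Sat]
    refine exists_congr fun u => hf _ _ fun w hw => ?_
    by_cases hwv : w = v
    · subst hwv; simp
    · simp [Function.update_of_ne hwv, h w ⟨hw, hwv⟩]

/-- The model with all letters outside `S` made false. -/
def restrictModel (M : Model) (S : Set ℕ) : Model where
  U := M.U
  rel := M.rel
  relBox := M.relBox
  relDiam := M.relDiam
  pred n a := n ∈ S ∧ M.pred n a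

theorem sat_restrict (M : Model) (S : Set ℕ) (φ : FOForm) : ∀ (α : ℕ → M.U),
    (φ.predLetters : Set ℕ) ⊆ S → (Sat (restrictModel M S) φ α ↔ Sat M φ α) := by
  induction φ with
  | falsum => intro α h; rfl
  | pred n v =>
    intro α h
    have : n ∈ S := h (by simp [FOForm.predLetters])
    exact ⟨fun h => h.2, fun h => ⟨this, h⟩⟩
  | rel s v w => intro α h; cases s <;> rfl
  | conj f g hf hg =>
    intro α h; simp only [FOForm.predLetters, Finset.coe_union, Set.union_subset_iff] at h
    exact and_congr (hf α h.1) (hg α h.2)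
  | disj f g hf hg =>
    intro α h; simp only [FOForm.predLetters, Finset.coe_union, Set.union_subset_iff] at h
    exact or_congr (hf α h.1) (hg α h.2)
  | impl f g hf hg =>
    intro α h; simp only [FOForm.predLetters, Finset.coe_union, Set.union_subset_iff] at h
    exact imp_congr (hf α h.1) (hg α h.2)
  | all v f hf => intro α h; exact forall_congr' fun u => hf _ h
  | ex v f hf => intro α h; exact exists_congr fun u => hf _ h

/-- Modal depth, with the diamond counting twice. -/
def mdepth : MForm → ℕ
  | .bot => 0
  | .prop _ => 0
  | .conj I J => max (mdepth I) (mdepth J)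
  | .disj I J => max (mdepth I) (mdepth J)
  | .impl I J => max (mdepth I) (mdepth J) + 1
  | .box I => mdepth I + 1
  | .diam I => mdepth I + 2

/-- One direction of the asimulation conditions. -/
def Half (Θ : Set ℕ) (N P : Model) (k : ℕ) (A : List N.U → List P.U → Prop)
    (Arev : List P.U → List N.U → Prop) (B : List N.U → List P.U → Prop) : Prop :=
  BaseCond N P Θ A ∧ StepCond N P k A Arev ∧ Box1Cond N P k A ∧
    Diam2aCond N P k A B ∧ Diam2bCond N P k B A

theorem append_pair {α : Type} (l : List α) (a b : α) : l ++ [a, b] = (l ++ [a]) ++ [b] := by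
  simp

theorem preserve (I : MForm) : ∀ (N P : Model) (k : ℕ)
    (A : List N.U → List P.U → Prop) (Arev : List P.U → List N.U → Prop)
    (B : List N.U → List P.U → Prop) (Brev : List P.U → List N.U → Prop),
    Half Set.univ N P k A Arev B → Half Set.univ P N k Arev A Brev →
    ∀ (as : List N.U) (bs : List P.U) (a : N.U) (b : P.U),
      as.length = bs.length → A (as ++ [a]) (bs ++ [b]) → as.length + mdepth I ≤ k →
      MSat N I a → MSat P I b := by
  induction I with
  | bot => intro N P k A Arev B Brev h h' as bs a b hl hA hk h; exact h
  | prop n =>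
    intro N P k A Arev B Brev h h' as bs a b hl hA hk hs
    exact h.1 as bs a b hA n trivial hs
  | conj I J hI hJ =>
    intro N P k A Arev B Brev h h' as bs a b hl hA hk hs
    simp only [mdepth] at hk
    exact ⟨hI N P k A Arev B Brev h h' as bs a b hl hA (by omega) hs.1,
      hJ N P k A Arev B Brev h h' as bs a b hl hA (by omega) hs.2⟩
  | disj I J hI hJ =>
    intro N P k A Arev B Brev h h' as bs a b hl hA hk hs
    simp only [mdepth] at hk
    exact hs.imp (hI N P k A Arev B Brev h h' as bs a b hl hA (by omega))
      (hJ N P k A Arev B Brev h h' as bs a b hl hA (by omega))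
  | impl I J hI hJ =>
    intro N P k A Arev B Brev h h' as bs a b hl hA hk hs
    simp only [mdepth] at hk
    intro d hbd hd
    obtain ⟨c, hac, h1, h2⟩ := h.2.1 as bs a b d hA hbd (by omega)
    rw [append_pair, append_pair] at h1 h2
    refine hJ N P k A Arev B Brev h h' _ _ c d (by simp [hl]) h1 (by simp; omega) (hs c hac ?_)
    exact hI P N k Arev A Brev B h' h _ _ d c (by simp [hl]) h2 (by simp; omega) hd
  | box I hI =>
    intro N P k A Arev B Brev h h' as bs a b hl hA hk hs
    simp only [mdepth] at hk
    intro d hbd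
    obtain ⟨c, hac, h1⟩ := h.2.2.1 as bs a b d hA hbd (by omega)
    rw [append_pair, append_pair] at h1
    exact hI N P k A Arev B Brev h h' _ _ c d (by simp [hl]) h1 (by simp; omega) (hs c hac)
  | diam I hI =>
    intro N P k A Arev B Brev h h' as bs a b hl hA hk hs
    simp only [mdepth] at hk
    intro d hbd
    obtain ⟨c, hac, h1⟩ := h.2.2.2.1 as bs a b d hA hbd (by omega)
    obtain ⟨e, hce, he⟩ := hs c hac
    rw [append_pair, append_pair] at h1
    obtain ⟨f, hdf, h2⟩ := h.2.2.2.2 _ _ c e d h1 hce (by simp; omega)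
    rw [append_pair, append_pair] at h2
    exact ⟨f, hdf, hI N P k A Arev B Brev h h' _ _ e f (by simp [hl]) h2 (by simp; omega) he⟩

/-- Finite conjunction. -/
def bigConj : List MForm → MForm
  | [] => .impl .bot .bot
  | I :: L => .conj I (bigConj L)

/-- Finite disjunction. -/
def bigDisj : List MForm → MForm
  | [] => .bot
  | I :: L => .disj I (bigDisj L)

theorem msat_bigConj (M : Model) (a : M.U) (L : List MForm) :
    MSat M (bigConj L) a ↔ ∀ I ∈ L, MSat M I a := by
  induction L with
  | nil => simp [bigConj, MSat]
  | cons I L ih => simp [bigConj, MSat, ih]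

theorem msat_bigDisj (M : Model) (a : M.U) (L : List MForm) :
    MSat M (bigDisj L) a ↔ ∃ I ∈ L, MSat M I a := by
  induction L with
  | nil => simp [bigDisj, MSat]
  | cons I L ih => simp [bigDisj, MSat, ih]

/-- Representative formulas of level `n` over the letters in `S`. -/
def lev (S : List ℕ) : ℕ → List MForm
  | 0 => S.map .prop
  | n + 1 => lev S n ++
      ((lev S n).sublists.flatMap fun s => (lev S n).sublists.map fun t =>
        .impl (bigConj s) (bigDisj t)) ++
      ((lev S n).sublists.map fun t => .box (bigDisj t)) ++
      (((lev S n).sublists.map bigConj).sublists.map fun t => .diam (bigDisj t))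

theorem prop_mem_lev (S : List ℕ) (m : ℕ) (hm : m ∈ S) (n : ℕ) : MForm.prop m ∈ lev S n := by
  induction n with
  | zero => simp [lev, hm]
  | succ n ih => simp [lev, ih]

theorem lev_succ (S : List ℕ) (n : ℕ) (I : MForm) (h : I ∈ lev S n) : I ∈ lev S (n + 1) := by
  simp [lev, h]

theorem impl_mem_lev (S : List ℕ) (n : ℕ) (s t : List MForm) (hs : s.Sublist (lev S n))
    (ht : t.Sublist (lev S n)) : MForm.impl (bigConj s) (bigDisj t) ∈ lev S (n + 1) := by
  simp only [lev, List.mem_append, List.mem_flatMap, List.mem_map, List.mem_sublists]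
  exact Or.inl (Or.inl (Or.inr ⟨s, hs, t, ht, rfl⟩))

theorem box_mem_lev (S : List ℕ) (n : ℕ) (t : List MForm)
    (ht : t.Sublist (lev S n)) : MForm.box (bigDisj t) ∈ lev S (n + 1) := by
  simp only [lev, List.mem_append, List.mem_map, List.mem_sublists]
  exact Or.inl (Or.inr ⟨t, ht, rfl⟩)

theorem diam_mem_lev (S : List ℕ) (n : ℕ) (t : List MForm)
    (ht : t.Sublist ((lev S n).sublists.map bigConj)) :
    MForm.diam (bigDisj t) ∈ lev S (n + 1) := by
  simp only [lev, List.mem_append, List.mem_map, List.mem_sublists]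
  exact Or.inr ⟨t, ht, rfl⟩

/-- Inclusion of level-`n` types. -/
def TyLe (S : List ℕ) (N P : Model) (n : ℕ) (a : N.U) (b : P.U) : Prop :=
  ∀ I ∈ lev S n, MSat N I a → MSat P I b

/-- Inclusion of the sets of possible level-`n` conjunctions. -/
def PosLe (S : List ℕ) (N P : Model) (n : ℕ) (a : N.U) (b : P.U) : Prop :=
  ∀ s, s.Sublist (lev S n) → (∃ c, N.relDiam a c ∧ MSat N (bigConj s) c) →
    ∃ d, P.relDiam b d ∧ MSat P (bigConj s) d

open Classical in
theorem ty_step (S : List ℕ) (N P : Model) (n : ℕ) (a : N.U) (b d : P.U)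
    (h : TyLe S N P (n + 1) a b) (hbd : P.rel b d) :
    ∃ c, N.rel a c ∧ TyLe S N P n c d ∧ TyLe S P N n d c := by
  by_contra hc
  have h1 := h _ (impl_mem_lev S n ((lev S n).filter fun J => MSat P J d)
    ((lev S n).filter fun J => ¬ MSat P J d) List.filter_sublist List.filter_sublist) ?_ d hbd ?_
  · rw [msat_bigDisj] at h1
    obtain ⟨I, hI, hd⟩ := h1
    simp at hI
    exact hI.2 hd
  · intro c hac hs
    rw [msat_bigDisj]
    rw [msat_bigConj] at hs
    simp only [List.mem_filter, decide_eq_true_eq] at hs ⊢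
    by_contra hno
    refine hc ⟨c, hac, fun I hI hIc => ?_, fun I hI hId => hs I ⟨hI, hId⟩⟩
    by_contra hId
    exact hno ⟨I, ⟨hI, hId⟩, hIc⟩
  · rw [msat_bigConj]
    intro I hI
    simp at hI
    exact hI.2

open Classical in
theorem ty_box (S : List ℕ) (N P : Model) (n : ℕ) (a : N.U) (b d : P.U)
    (h : TyLe S N P (n + 1) a b) (hbd : P.relBox b d) :
    ∃ c, N.relBox a c ∧ TyLe S N P n c d := by
  by_contra hc
  have h1 := h _ (box_mem_lev S n
    ((lev S n).filter fun J => ¬ MSat P J d) List.filter_sublist) ?_ d hbd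
  · rw [msat_bigDisj] at h1
    obtain ⟨I, hI, hd⟩ := h1
    simp at hI
    exact hI.2 hd
  · intro c hac
    rw [msat_bigDisj]
    simp only [List.mem_filter, decide_eq_true_eq]
    by_contra hno
    refine hc ⟨c, hac, fun I hI hIc => ?_⟩
    by_contra hId
    exact hno ⟨I, ⟨hI, hId⟩, hIc⟩

open Classical in
theorem ty_diam_a (S : List ℕ) (N P : Model) (n : ℕ) (a : N.U) (b d : P.U)
    (h : TyLe S N P (n + 2) a b) (hbd : P.rel b d) :
    ∃ c, N.rel a c ∧ PosLe S N P n c d := by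
  by_contra hc
  have h1 := h _ (lev_succ S _ _ (diam_mem_lev S n
    (((lev S n).sublists.map bigConj).filter
      fun J => ¬ ∃ f, P.relDiam d f ∧ MSat P J f) List.filter_sublist)) ?_ d hbd
  · obtain ⟨f, hdf, h2⟩ := h1
    rw [msat_bigDisj] at h2
    obtain ⟨I, hI, hd⟩ := h2
    simp only [List.mem_filter, decide_eq_true_eq] at hI
    exact hI.2 ⟨f, hdf, hd⟩
  · intro c hac
    by_contra hno
    refine hc ⟨c, hac, fun s hs hp => ?_⟩
    by_contra hq
    obtain ⟨e, hce, he⟩ := hp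
    refine hno ⟨e, hce, ?_⟩
    rw [msat_bigDisj]
    refine ⟨bigConj s, ?_, he⟩
    simp only [List.mem_filter, decide_eq_true_eq, List.mem_map, List.mem_sublists]
    exact ⟨⟨s, hs, rfl⟩, hq⟩

open Classical in
theorem ty_diam_b (S : List ℕ) (N P : Model) (n : ℕ) (a c : N.U) (b : P.U)
    (h : PosLe S N P n a b) (hac : N.relDiam a c) :
    ∃ d, P.relDiam b d ∧ TyLe S N P n c d := by
  obtain ⟨d, hbd, hd⟩ := h ((lev S n).filter fun J => MSat N J c) List.filter_sublist
    ⟨c, hac, by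
      rw [msat_bigConj]
      intro I hI
      simp at hI
      exact hI.2⟩
  refine ⟨d, hbd, fun I hI hIc => ?_⟩
  rw [msat_bigConj] at hd
  exact hd I (by simp [hI, hIc])

/-- The canonical relation `A`. -/
def canA (S : List ℕ) (k : ℕ) (N P : Model) (as : List N.U) (bs : List P.U) : Prop :=
  as ≠ [] ∧ as.length = bs.length ∧
    ∀ a ∈ as.getLast?, ∀ b ∈ bs.getLast?, TyLe S N P (k + 1 - as.length) a b

/-- The canonical relation `B`. -/
def canB (S : List ℕ) (k : ℕ) (N P : Model) (as : List N.U) (bs : List P.U) : Prop :=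
  as ≠ [] ∧ as.length = bs.length ∧
    ∀ a ∈ as.getLast?, ∀ b ∈ bs.getLast?, PosLe S N P (k - as.length) a b

theorem canA_iff (S : List ℕ) (k : ℕ) (N P : Model) (as : List N.U) (bs : List P.U)
    (a : N.U) (b : P.U) : canA S k N P (as ++ [a]) (bs ++ [b]) ↔
      as.length = bs.length ∧ TyLe S N P (k - as.length) a b := by
  simp [canA]

theorem canB_iff (S : List ℕ) (k : ℕ) (N P : Model) (as : List N.U) (bs : List P.U)
    (a : N.U) (b : P.U) : canB S k N P (as ++ [a]) (bs ++ [b]) ↔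
      as.length = bs.length ∧ PosLe S N P (k - (as.length + 1)) a b := by
  simp [canB]

theorem can_half (S : List ℕ) (k : ℕ) (N P : Model) :
    Half {n | n ∈ S} N P k (canA S k N P) (canA S k P N) (canB S k N P) := by
  refine ⟨?_, ?_, ?_, ?_, ?_⟩
  · intro as bs a b hA n hn h
    rw [canA_iff] at hA
    exact hA.2 _ (prop_mem_lev S n hn _) h
  · intro as bs a b d hA hbd hk
    rw [canA_iff] at hA
    obtain ⟨n, hn⟩ : ∃ n, k - as.length = n + 1 := ⟨k - as.length - 1, by omega⟩
    rw [hn] at hA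
    obtain ⟨c, hac, h1, h2⟩ := ty_step S N P n a b d hA.2 hbd
    have e1 : k - (as.length + 1) = n := by omega
    have e2 : k - (bs.length + 1) = n := by omega
    refine ⟨c, hac, ?_, ?_⟩
    · rw [append_pair, append_pair, canA_iff]
      simp [hA.1, e2, h1]
    · rw [append_pair, append_pair, canA_iff]
      simp [hA.1, e2, h2]
  · intro as bs a b d hA hbd hk
    rw [canA_iff] at hA
    obtain ⟨n, hn⟩ : ∃ n, k - as.length = n + 1 := ⟨k - as.length - 1, by omega⟩
    rw [hn] at hA
    obtain ⟨c, hac, h1⟩ := ty_box S N P n a b d hA.2 hbd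
    have e2 : k - (bs.length + 1) = n := by omega
    refine ⟨c, hac, ?_⟩
    rw [append_pair, append_pair, canA_iff]
    simp [hA.1, e2, h1]
  · intro as bs a b d hA hbd hk
    rw [canA_iff] at hA
    obtain ⟨n, hn⟩ : ∃ n, k - as.length = n + 2 := ⟨k - as.length - 2, by omega⟩
    rw [hn] at hA
    obtain ⟨c, hac, h1⟩ := ty_diam_a S N P n a b d hA.2 hbd
    have e2 : k - (bs.length + 1 + 1) = n := by omega
    refine ⟨c, hac, ?_⟩
    rw [append_pair, append_pair, canB_iff]
    simp [hA.1, e2, h1]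
  · intro as bs a c b hB hac hk
    rw [canB_iff] at hB
    obtain ⟨d, hbd, h1⟩ := ty_diam_b S N P _ a c b hB.2 hac
    refine ⟨d, hbd, ?_⟩
    rw [append_pair, append_pair, canA_iff]
    refine ⟨by simp [hB.1], ?_⟩
    simpa using h1

theorem satAt_iff (M : Model) (x : ℕ) (φ : FOForm) (hfv : φ.freeVars ⊆ {x}) (α : ℕ → M.U) :
    SatAt M (α x) x φ ↔ Sat M φ α := by
  refine ⟨fun h => h α rfl, fun h β hβ => ?_⟩
  refine (sat_congr M φ β α fun v hv => ?_).2 h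
  have := hfv hv
  simp at this
  rw [this, hβ]

theorem half_restrict (Θ : Set ℕ) (N P : Model) (k : ℕ) (A : List N.U → List P.U → Prop)
    (Arev : List P.U → List N.U → Prop) (B : List N.U → List P.U → Prop)
    (h : Half Θ N P k A Arev B) :
    Half Set.univ (restrictModel N Θ) (restrictModel P Θ) k A Arev B := by
  refine ⟨?_, h.2.1, h.2.2.1, h.2.2.2.1, h.2.2.2.2⟩
  intro as bs a b hA n _ hs
  exact ⟨hs.1, h.1 as bs a b hA n hs.1 hs.2⟩

/-- **Theorem 1, case (i,j) = (1,2).**  φ(x) is logically equivalent to the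
(1,2)-standard x-translation of a modal intuitionistic formula iff there is a
k ∈ ℕ such that φ(x) is invariant with respect to (1,2)-modal k-asimulations. -/
theorem statement_3 (x : ℕ) (φ : FOForm) (hfv : φ.freeVars ⊆ {x}) :
    (∃ I : MForm, Equiv φ (ST true false I x)) ↔
    (∃ k : ℕ, KInvariantD2 true x φ k) := by
  classical
  constructor
  · rintro ⟨I, hI⟩
    refine ⟨mdepth I, ?_⟩
    intro Θ hΘ M₁ M₂ t u A12 A21 B12 B21 hA a b hab hs
    obtain ⟨-, -, -, -, -, b1, b2, s1, s2, bx, da1, da2, db1, db2⟩ := hA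
    simp only [if_true] at bx
    have H1 : Half Θ M₁ M₂ (mdepth I) A12 A21 B12 := ⟨b1, s1, bx.1, da1, db1⟩
    have H2 : Half Θ M₂ M₁ (mdepth I) A21 A12 B21 := ⟨b2, s2, bx.2, da2, db2⟩
    intro β hβ
    rw [← sat_restrict M₂ Θ φ β hΘ]
    refine (hI (restrictModel M₂ Θ) β).2 ((sat_ST (restrictModel M₂ Θ) I x β).2 ?_)
    have h1 : Sat M₁ φ (fun _ => a) := hs _ rfl
    rw [← sat_restrict M₁ Θ φ _ hΘ] at h1
    have h2 := (sat_ST (restrictModel M₁ Θ) I x _).1 ((hI (restrictModel M₁ Θ) _).1 h1)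
    rw [hβ]
    exact preserve I (restrictModel M₁ Θ) (restrictModel M₂ Θ) (mdepth I) A12 A21 B12 B21
      (half_restrict _ _ _ _ _ _ _ H1) (half_restrict _ _ _ _ _ _ _ H2) [] [] a b rfl hab
      (by simp) h2
  · rintro ⟨k, hk⟩
    let S := φ.predLetters.toList
    let L := lev S k
    have key : ∀ (M N : Model) (α : ℕ → M.U) (β : ℕ → N.U), Sat M φ α →
        TyLe S M N k (α x) (β x) → Sat N φ β := by
      intro M N α β hφ hT
      rw [← satAt_iff M x φ hfv] at hφ
      rw [← satAt_iff N x φ hfv]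
      have hroot : canA S k M N [α x] [β x] := by
        have := (canA_iff S k M N [] [] (α x) (β x)).2 ⟨rfl, by simpa using hT⟩
        simpa using this
      obtain ⟨b1, s1, x1, da1, db1⟩ := can_half S k M N
      obtain ⟨b2, s2, x2, da2, db2⟩ := can_half S k N M
      refine hk {n | n ∈ S} (fun n hn => by simpa [S] using hn) M N (α x) (β x)
        (canA S k M N) (canA S k N M) (canB S k M N) (canB S k N M) ?_ _ _ hroot hφ
      refine ⟨fun _ _ h => ⟨h.1, h.2.1⟩, fun _ _ h => ⟨h.1, h.2.1⟩, fun _ _ h => ⟨h.1, h.2.1⟩,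
        fun _ _ h => ⟨h.1, h.2.1⟩, hroot, b1, b2, s1, s2, ?_, da1, da2, db1, db2⟩
      simp only [if_true]
      exact ⟨x1, x2⟩
    refine ⟨bigDisj ((L.sublists.map bigConj).filter fun J =>
      ∀ (N : Model) (β : ℕ → N.U), MSat N J (β x) → Sat N φ β), ?_⟩
    intro M α
    rw [sat_ST, msat_bigDisj]
    simp only [List.mem_filter, decide_eq_true_eq, List.mem_map, List.mem_sublists]
    constructor
    · intro hφ
      refine ⟨bigConj (L.filter fun J => MSat M J (α x)), ⟨⟨_, List.filter_sublist, rfl⟩, ?_⟩, ?_⟩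
      · intro N β hβ
        refine key M N α β hφ fun I hI hIa => ?_
        rw [msat_bigConj] at hβ
        exact hβ I (by simp [L, hI, hIa])
      · rw [msat_bigConj]
        intro I hI
        simp at hI
        exact hI.2
    · rintro ⟨J, ⟨-, hJ⟩, hs⟩
      exact hJ M α hs

end ModalIntAsim
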